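/- Let p be an odd prime, let k be a field of characteristic p, and let ξ ∈ k be a primitive 2(p−1)-th root of unity. Let f := X^{p²} − X viewed in RatFunc k, and let K := (RatFunc k)[Y]/(Y² − f). Then: (a) the polynomial Y² − f is irreducible over RatFunc k, so K is a field of degree 2 over RatFunc k; (b) writing t and y for the images in K of X and of the adjoined root of Y² − f, there exist k-algebra automorphisms σ and ρ of K with σ(t) = t + 1, σ(y) = y, ρ(t) = ξ⁻²·t and ρ(y) = ξ⁻¹·y; (c) σ has order p, ρ has order 2(p−1), ρ^{p−1} fixes t and sends y to −y, and the subgroup of the k-automorphism group of K generated by {σ, ρ} is finite of order 2·p·(p−1). -/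

import Mathlib

/-- The polynomial `Y² - (X^{p²} - X)` over the rational function field `k(X)`. -/
noncomputable def hyperellipticPoly (k : Type*) [Field k] (p : ℕ) :
    Polynomial (RatFunc k) :=
  Polynomial.X ^ 2 - Polynomial.C (RatFunc.X ^ p ^ 2 - RatFunc.X)

/-!
If `b` and `c²` lie in the prime field, then the substitution `X ↦ c²X + b` multiplies `X^{p²} - X`
by `c²`, so it lifts to the quadratic extension by `y ↦ cy`. The pairs `(b, c) = (1, 1)` and
`(0, ξ⁻¹)` give `σ` and `ρ`, whose orders can be read off from their actions on `t` and `y`.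
Conjugation by `ρ` turns the translation `σ` into another translation by an element of the prime
field, that is, a power of `σ`; as `p` and `2(p - 1)` are coprime, `⟨σ, ρ⟩` is a semidirect product
of `⟨σ⟩` and `⟨ρ⟩`. Irreducibility of `Y² - (X^{p²} - X)` holds because `X^{p²} - X` has odd degree
and so is not a square.
-/

open Polynomial

section Group

open Subgroup

variable {G : Type*} [Group G]

lemma natCard_sup_of_disjoint_of_le_normalizer {N H : Subgroup G} (hdisj : Disjoint N H)
    (hle : H ≤ normalizer (N : Set G)) :
    Nat.card (N ⊔ H : Subgroup G) = Nat.card N * Nat.card H := by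
  have hrange : Set.range (fun g : N × H ↦ (g.1 * g.2 : G)) = (N ⊔ H : Subgroup G) := by
    rw [coe_mul_of_right_le_normalizer_left N H hle]
    ext
    simp [Set.mem_mul]
  rw [← Nat.card_prod, ← Nat.card_range_of_injective (mul_injective_of_disjoint hdisj), hrange]
  rfl

lemma mem_normalizer_zpowers_of_conj_mem {s r : G} (hs : IsOfFinOrder s)
    (hconj : r * s * r⁻¹ ∈ zpowers s) : r ∈ normalizer (zpowers s : Set G) := by
  have : Finite (zpowers s : Set G) := finite_zpowers.2 hs
  refine mem_normalizer_fintype fun g hg ↦ ?_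
  obtain ⟨j, rfl⟩ := mem_zpowers_iff.1 hg
  rw [← conj_zpow]
  exact zpow_mem hconj j

lemma natCard_closure_pair_of_conj_mem_zpowers {s r : G} (hs : IsOfFinOrder s)
    (hconj : r * s * r⁻¹ ∈ zpowers s) (hcop : (orderOf s).Coprime (orderOf r)) :
    Nat.card (Subgroup.closure {s, r}) = orderOf s * orderOf r := by
  have hle : zpowers r ≤ normalizer (zpowers s : Set G) :=
    zpowers_le.2 (mem_normalizer_zpowers_of_conj_mem hs hconj)
  have hdisj : Disjoint (zpowers s) (zpowers r) :=
    disjoint_of_coprime_natCard (by rwa [Nat.card_zpowers, Nat.card_zpowers])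
  rw [Set.insert_eq, Subgroup.closure_union, ← zpowers_eq_closure, ← zpowers_eq_closure,
    natCard_sup_of_disjoint_of_le_normalizer hdisj hle, Nat.card_zpowers, Nat.card_zpowers]

end Group

section AlgEquivPow

variable {R A : Type*} [CommSemiring R] [Semiring A] [Algebra R A]

lemma algEquiv_pow_apply_of_apply_eq_smul {φ : A ≃ₐ[R] A} {x : A} {c : R} (h : φ x = c • x)
    (n : ℕ) : (φ ^ n) x = c ^ n • x := by
  induction n with
  | zero => simp
  | succ n ih => rw [pow_succ', AlgEquiv.mul_apply, ih, map_smul, h, smul_smul, ← pow_succ]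

lemma algEquiv_pow_apply_of_apply_eq_self {φ : A ≃ₐ[R] A} {x : A} (h : φ x = x) (n : ℕ) :
    (φ ^ n) x = x := by
  simpa only [one_pow, one_smul] using
    algEquiv_pow_apply_of_apply_eq_smul (h.trans (one_smul R x).symm) n

lemma algEquiv_pow_apply_of_apply_eq_add_one {φ : A ≃ₐ[R] A} {x : A} (h : φ x = x + 1)
    (n : ℕ) : (φ ^ n) x = x + n := by
  induction n with
  | zero => simp
  | succ n ih =>
    rw [pow_succ', AlgEquiv.mul_apply, ih, map_add, h, map_natCast, Nat.cast_succ,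
      add_assoc, add_comm 1]

end AlgEquivPow

section RadicalExtension

variable {R L : Type*} [CommRing R] [CommRing L] [Algebra R L] {n : ℕ} {f : L}

lemma adjoinRoot_root_X_pow_sub_C_pow :
    AdjoinRoot.root (X ^ n - C f) ^ n = AdjoinRoot.of (X ^ n - C f) f := by
  have h := AdjoinRoot.eval₂_root (X ^ n - C f)
  rwa [eval₂_sub, eval₂_X_pow, eval₂_C, sub_eq_zero] at h

/-- The endomorphism of `L[Y]/(Yⁿ - f)` that extends an automorphism `τ` of `L` and sends the root
`y` to `c • y`. -/
noncomputable def radicalHom (τ : L ≃ₐ[R] L) (c : R) (h : τ f = c ^ n • f) :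
    AdjoinRoot (X ^ n - C f) →ₐ[R] AdjoinRoot (X ^ n - C f) :=
  AdjoinRoot.liftAlgHom _ ((IsScalarTower.toAlgHom R L _).comp τ) (c • AdjoinRoot.root _) <| by
    suffices c ^ n • AdjoinRoot.root (X ^ n - C f) ^ n = AdjoinRoot.of _ (c ^ n • f) by
      simpa [_root_.smul_pow, h, sub_eq_zero] using this
    rw [adjoinRoot_root_X_pow_sub_C_pow, AdjoinRoot.smul_of]

@[simp]
lemma radicalHom_algebraMap (τ : L ≃ₐ[R] L) (c : R) (h : τ f = c ^ n • f) (x : L) :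
    radicalHom τ c h (algebraMap L _ x) = algebraMap L _ (τ x) :=
  AdjoinRoot.liftAlgHom_of ..

@[simp]
lemma radicalHom_root (τ : L ≃ₐ[R] L) (c : R) (h : τ f = c ^ n • f) :
    radicalHom τ c h (AdjoinRoot.root _) = c • AdjoinRoot.root _ :=
  AdjoinRoot.liftAlgHom_root ..

lemma radicalHom_comp_radicalHom {τ τ' : L ≃ₐ[R] L} {c c' : R} (h : τ f = c ^ n • f)
    (h' : τ' f = c' ^ n • f) (hτ : ∀ x, τ (τ' x) = x) (hc : c' * c = 1) :
    (radicalHom τ c h).comp (radicalHom τ' c' h') = AlgHom.id R _ := by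
  refine AdjoinRoot.algHom_ext' (AlgHom.ext fun x ↦ ?_) ?_
  · simp [← AdjoinRoot.algebraMap_eq, hτ]
  · simp [smul_smul, hc]

lemma algEquiv_symm_apply_eq_inv_pow_smul {τ : L ≃ₐ[R] L} {c : Rˣ}
    (h : τ f = (c : R) ^ n • f) : τ.symm f = (↑c⁻¹ : R) ^ n • f := by
  rw [AlgEquiv.symm_apply_eq, map_smul, h, smul_smul, ← mul_pow, Units.inv_mul, one_pow, one_smul]

/-- The automorphism of `L[Y]/(Yⁿ - f)` that extends an automorphism `τ` of `L` and scales the root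
by the unit `c`. -/
noncomputable def radicalAut (τ : L ≃ₐ[R] L) (c : Rˣ) (h : τ f = (c : R) ^ n • f) :
    AdjoinRoot (X ^ n - C f) ≃ₐ[R] AdjoinRoot (X ^ n - C f) :=
  AlgEquiv.ofAlgHom (radicalHom τ c h)
    (radicalHom τ.symm ↑c⁻¹ (algEquiv_symm_apply_eq_inv_pow_smul h))
    (radicalHom_comp_radicalHom _ _ τ.apply_symm_apply c.inv_mul)
    (radicalHom_comp_radicalHom _ _ τ.symm_apply_apply c.mul_inv)

lemma radicalAut_algebraMap (τ : L ≃ₐ[R] L) (c : Rˣ) (h : τ f = (c : R) ^ n • f) (x : L) :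
    radicalAut τ c h (algebraMap L _ x) = algebraMap L _ (τ x) :=
  radicalHom_algebraMap τ c h x

lemma radicalAut_root (τ : L ≃ₐ[R] L) (c : Rˣ) (h : τ f = (c : R) ^ n • f) :
    radicalAut τ c h (AdjoinRoot.root _) = (c : R) • AdjoinRoot.root _ :=
  radicalHom_root τ c h

end RadicalExtension

section RatFunc

variable {k : Type*} [Field k]

lemma ratFunc_algHom_ext {A : Type*} [Semiring A] [Algebra k A] {φ ψ : RatFunc k →ₐ[k] A}
    (h : φ RatFunc.X = ψ RatFunc.X) : φ = ψ := by
  refine IsLocalization.algHom_ext (nonZeroDivisors k[X]) (Polynomial.algHom_ext ?_)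
  simpa [Algebra.algHom] using h

lemma ratFunc_intDegree_pow (g : RatFunc k) (n : ℕ) : (g ^ n).intDegree = n * g.intDegree := by
  obtain rfl | hg := eq_or_ne g 0
  · obtain rfl | hn := eq_or_ne n 0 <;> simp [*]
  · induction n with
    | zero => simp
    | succ n ih =>
      rw [pow_succ, RatFunc.intDegree_mul (pow_ne_zero n hg) hg, ih]
      push_cast
      ring

lemma ratFunc_intDegree_X_pow_sub_X {n : ℕ} (hn : 1 < n) :
    (RatFunc.X ^ n - RatFunc.X : RatFunc k).intDegree = n := by
  have h : (RatFunc.X ^ n - RatFunc.X : RatFunc k) = algebraMap k[X] _ (X ^ n - X) := by simp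
  rw [h, RatFunc.intDegree_polynomial, FiniteField.X_pow_card_sub_X_natDegree_eq k hn]

lemma irreducible_X_pow_sub_C_of_not_dvd_intDegree {q : ℕ} (hq : q.Prime) {f : RatFunc k}
    (hf : ¬ (q : ℤ) ∣ f.intDegree) : Irreducible (X ^ q - C f) := by
  refine X_pow_sub_C_irreducible_of_prime hq ?_
  rintro g rfl
  exact hf ⟨_, ratFunc_intDegree_pow g q⟩

/-- The automorphism of `k(X)` over `k` given by the substitution `X ↦ aX + b`. -/
noncomputable def affineSubst (a : kˣ) (b : k) : RatFunc k ≃ₐ[k] RatFunc k :=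
  IsFractionRing.algEquivOfAlgEquiv (algEquivCMulXAddC (a : k) b)

lemma affineSubst_X (a : kˣ) (b : k) :
    affineSubst a b RatFunc.X = (a : k) • RatFunc.X + algebraMap k (RatFunc k) b := by
  rw [← RatFunc.algebraMap_X, affineSubst, IsFractionRing.algEquivOfAlgEquiv_algebraMap]
  simp [Algebra.smul_def]

lemma affineSubst_X_pow_sub_X {p n : ℕ} [Fact p.Prime] [CharP k p] {a : kˣ} {b : k}
    (ha : (a : k) ^ p ^ n = a) (hb : b ^ p ^ n = b) :
    affineSubst a b (RatFunc.X ^ p ^ n - RatFunc.X) =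
      (a : k) • (RatFunc.X ^ p ^ n - RatFunc.X) := by
  have : CharP (RatFunc k) p := charP_of_injective_algebraMap (algebraMap k _).injective p
  rw [map_sub, map_pow, affineSubst_X, add_pow_char_pow, _root_.smul_pow, ← map_pow, ha, hb,
    smul_sub, add_sub_add_right_eq_sub]

end RatFunc

lemma exists_natCast_eq_of_pow_char_eq_self {F : Type*} [Field F] {p : ℕ} [Fact p.Prime]
    [CharP F p] {x : F} (hx : x ^ p = x) : ∃ m : ℕ, (m : F) = x := by
  rw [← Subfield.mem_bot_iff_pow_eq_self, ← ZMod.fieldRange_castHom_eq_bot p] at hx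
  obtain ⟨z, rfl⟩ := hx
  obtain ⟨m, rfl⟩ := ZMod.natCast_zmod_surjective z
  exact ⟨m, (map_natCast _ m).symm⟩

section AdjoinRootRatFunc

variable {k : Type*} [Field k] {P : (RatFunc k)[X]}

lemma adjoinRoot_ratFunc_algEquiv_ext {φ ψ : AdjoinRoot P ≃ₐ[k] AdjoinRoot P}
    (hX : φ (algebraMap (RatFunc k) _ RatFunc.X) = ψ (algebraMap (RatFunc k) _ RatFunc.X))
    (hroot : φ (AdjoinRoot.root P) = ψ (AdjoinRoot.root P)) : φ = ψ := by
  have h : (φ : AdjoinRoot P →ₐ[k] AdjoinRoot P) = ψ :=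
    AdjoinRoot.algHom_ext' (ratFunc_algHom_ext hX) hroot
  exact AlgEquiv.ext (AlgHom.congr_fun h)

variable {σ ρ : AdjoinRoot P ≃ₐ[k] AdjoinRoot P}

lemma orderOf_translation {p : ℕ} [CharP k p] [Nontrivial (AdjoinRoot P)]
    (hX : σ (algebraMap (RatFunc k) _ RatFunc.X) = algebraMap (RatFunc k) _ RatFunc.X + 1)
    (hroot : σ (AdjoinRoot.root P) = AdjoinRoot.root P) : orderOf σ = p := by
  have : CharP (AdjoinRoot P) p := charP_of_injective_algebraMap (algebraMap k _).injective p
  refine Nat.dvd_right_iff_eq.1 fun n ↦ ?_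
  rw [orderOf_dvd_iff_pow_eq_one, ← CharP.cast_eq_zero_iff (AdjoinRoot P) p]
  have hXn := algEquiv_pow_apply_of_apply_eq_add_one hX n
  refine ⟨fun h ↦ by simpa [h] using hXn, fun h ↦ adjoinRoot_ratFunc_algEquiv_ext ?_ ?_⟩
  · simpa [h] using hXn
  · exact algEquiv_pow_apply_of_apply_eq_self hroot n

lemma orderOf_dilation {n : ℕ} {c : k}
    (hX : ρ (algebraMap (RatFunc k) _ RatFunc.X) = c ^ n • algebraMap (RatFunc k) _ RatFunc.X)
    (hroot : ρ (AdjoinRoot.root P) = c • AdjoinRoot.root P) (hne : AdjoinRoot.root P ≠ 0) :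
    orderOf ρ = orderOf c := by
  refine orderOf_eq_orderOf_iff.2 fun m ↦ ?_
  have hrootm := algEquiv_pow_apply_of_apply_eq_smul hroot m
  refine ⟨fun h ↦ ?_, fun h ↦ adjoinRoot_ratFunc_algEquiv_ext ?_ ?_⟩
  · refine smul_left_injective k hne ?_
    simpa [h] using hrootm.symm
  · rw [algEquiv_pow_apply_of_apply_eq_smul hX m, pow_right_comm, h, one_pow, one_smul,
      AlgEquiv.one_apply]
  · simpa [h] using hrootm

lemma dilation_mul_translation {a c : k} {m : ℕ} (hm : a * m = 1)
    (hσX : σ (algebraMap (RatFunc k) _ RatFunc.X) = algebraMap (RatFunc k) _ RatFunc.X + 1)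
    (hσroot : σ (AdjoinRoot.root P) = AdjoinRoot.root P)
    (hρX : ρ (algebraMap (RatFunc k) _ RatFunc.X) = a • algebraMap (RatFunc k) _ RatFunc.X)
    (hρroot : ρ (AdjoinRoot.root P) = c • AdjoinRoot.root P) : ρ * σ = σ ^ m * ρ := by
  apply adjoinRoot_ratFunc_algEquiv_ext
  · have hone : a • (m : AdjoinRoot P) = 1 := by
      rw [Algebra.smul_def, ← map_natCast (algebraMap k (AdjoinRoot P)), ← map_mul, hm, map_one]
    rw [AlgEquiv.mul_apply, AlgEquiv.mul_apply, hσX, map_add, map_one, hρX, map_smul,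
      algEquiv_pow_apply_of_apply_eq_add_one hσX, smul_add, hone]
  · rw [AlgEquiv.mul_apply, AlgEquiv.mul_apply, hσroot, hρroot, map_smul,
      algEquiv_pow_apply_of_apply_eq_self hσroot]

lemma conj_translation_mem_zpowers {p : ℕ} [Fact p.Prime] [CharP k p] {a c : k} (ha0 : a ≠ 0)
    (ha : a ^ p = a)
    (hσX : σ (algebraMap (RatFunc k) _ RatFunc.X) = algebraMap (RatFunc k) _ RatFunc.X + 1)
    (hσroot : σ (AdjoinRoot.root P) = AdjoinRoot.root P)
    (hρX : ρ (algebraMap (RatFunc k) _ RatFunc.X) = a • algebraMap (RatFunc k) _ RatFunc.X)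
    (hρroot : ρ (AdjoinRoot.root P) = c • AdjoinRoot.root P) :
    ρ * σ * ρ⁻¹ ∈ Subgroup.zpowers σ := by
  obtain ⟨m, hm⟩ := exists_natCast_eq_of_pow_char_eq_self (p := p) (x := a⁻¹) (by rw [inv_pow, ha])
  have ham : a * m = 1 := by rw [hm, mul_inv_cancel₀ ha0]
  rw [dilation_mul_translation ham hσX hσroot hρX hρroot, mul_inv_cancel_right]
  exact Subgroup.npow_mem_zpowers σ m

end AdjoinRootRatFunc

section Hyperelliptic

variable {k : Type*} [Field k] {p : ℕ}

lemma irreducible_hyperellipticPoly (hp : p.Prime) (hodd : Odd p) :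
    Irreducible (hyperellipticPoly k p) := by
  refine irreducible_X_pow_sub_C_of_not_dvd_intDegree Nat.prime_two ?_
  rw [ratFunc_intDegree_X_pow_sub_X (Nat.one_lt_pow two_ne_zero hp.one_lt)]
  exact_mod_cast hodd.pow.not_two_dvd_nat

lemma finrank_adjoinRoot_hyperellipticPoly :
    Module.finrank (RatFunc k) (AdjoinRoot (hyperellipticPoly k p)) = 2 :=
  finrank_quotient_span_eq_natDegree.trans natDegree_X_pow_sub_C

lemma root_hyperellipticPoly_ne_zero : AdjoinRoot.root (hyperellipticPoly k p) ≠ 0 :=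
  root_X_pow_sub_C_ne_zero one_lt_two _

lemma exists_algEquiv_adjoinRoot_hyperellipticPoly [Fact p.Prime] [CharP k p] {b c : k}
    (hc0 : c ≠ 0) (hc : (c ^ 2) ^ p = c ^ 2) (hb : b ^ p = b) :
    ∃ φ : AdjoinRoot (hyperellipticPoly k p) ≃ₐ[k] AdjoinRoot (hyperellipticPoly k p),
      φ (algebraMap (RatFunc k) _ RatFunc.X) =
        c ^ 2 • algebraMap (RatFunc k) _ RatFunc.X + algebraMap k _ b ∧
      φ (AdjoinRoot.root _) = c • AdjoinRoot.root _ := by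
  lift c to kˣ using hc0.isUnit
  have hf : affineSubst (c ^ 2) b (RatFunc.X ^ p ^ 2 - RatFunc.X) =
      (c : k) ^ 2 • (RatFunc.X ^ p ^ 2 - RatFunc.X) := by
    rw [affineSubst_X_pow_sub_X, Units.val_pow_eq_pow_val]
    · rw [Units.val_pow_eq_pow_val, sq p, pow_mul, hc, hc]
    · rw [sq, pow_mul, hb, hb]
  have hX : algebraMap (RatFunc k) (AdjoinRoot (hyperellipticPoly k p))
      (affineSubst (c ^ 2) b RatFunc.X) =
        (c : k) ^ 2 • algebraMap (RatFunc k) _ RatFunc.X + algebraMap k _ b := by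
    rw [affineSubst_X, map_add, Units.val_pow_eq_pow_val, Algebra.smul_def, map_mul,
      ← IsScalarTower.algebraMap_apply, ← IsScalarTower.algebraMap_apply, ← Algebra.smul_def]
  exact ⟨radicalAut (affineSubst (c ^ 2) b) c hf,
    (radicalAut_algebraMap _ c hf RatFunc.X).trans hX, radicalAut_root _ c hf⟩

lemma exists_translation_adjoinRoot_hyperellipticPoly [Fact p.Prime] [CharP k p] :
    ∃ σ : AdjoinRoot (hyperellipticPoly k p) ≃ₐ[k] AdjoinRoot (hyperellipticPoly k p),
      σ (algebraMap (RatFunc k) _ RatFunc.X) = algebraMap (RatFunc k) _ RatFunc.X + 1 ∧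
      σ (AdjoinRoot.root _) = AdjoinRoot.root _ := by
  simpa only [one_pow, one_smul, map_one] using
    exists_algEquiv_adjoinRoot_hyperellipticPoly (b := (1 : k)) one_ne_zero (by simp) (one_pow p)

lemma exists_dilation_adjoinRoot_hyperellipticPoly [Fact p.Prime] [CharP k p] {c : k}
    (hc0 : c ≠ 0) (hc : (c ^ 2) ^ p = c ^ 2) :
    ∃ ρ : AdjoinRoot (hyperellipticPoly k p) ≃ₐ[k] AdjoinRoot (hyperellipticPoly k p),
      ρ (algebraMap (RatFunc k) _ RatFunc.X) = c ^ 2 • algebraMap (RatFunc k) _ RatFunc.X ∧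
      ρ (AdjoinRoot.root _) = c • AdjoinRoot.root _ := by
  simpa only [map_zero, add_zero] using
    exists_algEquiv_adjoinRoot_hyperellipticPoly hc0 hc (zero_pow (NeZero.ne p))

end Hyperelliptic

lemma coprime_two_mul_sub_one {n : ℕ} (hn : Odd n) : n.Coprime (2 * (n - 1)) :=
  hn.coprime_two_right.mul_right
    ((Nat.coprime_self_sub_right hn.pos).2 (Nat.coprime_one_right n))

/-- Assumption 4.1 of the paper: `K = k(X)(√(X^{p²} - X))` is a degree-2 field
extension of `k(X)`, and it carries `k`-algebra automorphisms `σ, ρ` with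
`σ(t) = t + 1`, `σ(y) = y`, `ρ(t) = ξ⁻²t`, `ρ(y) = ξ⁻¹y`, where `σ` has order
`p`, `ρ` has order `2(p-1)`, `ρ^{p-1}` is the hyperelliptic involution, and
`⟨σ, ρ⟩` has order `2p(p-1)`. -/
theorem hyperelliptic_field_and_automorphisms
    (p : ℕ) (hp : p.Prime) (hodd : Odd p)
    (k : Type*) [Field k] [CharP k p]
    (ξ : k) (hξ : IsPrimitiveRoot ξ (2 * (p - 1))) :
    Irreducible (hyperellipticPoly k p) ∧
    IsField (AdjoinRoot (hyperellipticPoly k p)) ∧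
    Module.finrank (RatFunc k) (AdjoinRoot (hyperellipticPoly k p)) = 2 ∧
    ∃ σ ρ : AdjoinRoot (hyperellipticPoly k p) ≃ₐ[k] AdjoinRoot (hyperellipticPoly k p),
      σ (algebraMap (RatFunc k) (AdjoinRoot (hyperellipticPoly k p)) RatFunc.X)
          = algebraMap (RatFunc k) (AdjoinRoot (hyperellipticPoly k p)) RatFunc.X + 1 ∧
      σ (AdjoinRoot.root (hyperellipticPoly k p)) = AdjoinRoot.root (hyperellipticPoly k p) ∧
      ρ (algebraMap (RatFunc k) (AdjoinRoot (hyperellipticPoly k p)) RatFunc.X)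
          = algebraMap k (AdjoinRoot (hyperellipticPoly k p)) ((ξ ^ 2)⁻¹) *
            algebraMap (RatFunc k) (AdjoinRoot (hyperellipticPoly k p)) RatFunc.X ∧
      ρ (AdjoinRoot.root (hyperellipticPoly k p))
          = algebraMap k (AdjoinRoot (hyperellipticPoly k p)) ξ⁻¹ *
            AdjoinRoot.root (hyperellipticPoly k p) ∧
      orderOf σ = p ∧
      orderOf ρ = 2 * (p - 1) ∧
      (ρ ^ (p - 1)) (algebraMap (RatFunc k) (AdjoinRoot (hyperellipticPoly k p)) RatFunc.X)
          = algebraMap (RatFunc k) (AdjoinRoot (hyperellipticPoly k p)) RatFunc.X ∧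
      (ρ ^ (p - 1)) (AdjoinRoot.root (hyperellipticPoly k p))
          = - AdjoinRoot.root (hyperellipticPoly k p) ∧
      Nat.card (Subgroup.closure {σ, ρ} :
          Subgroup (AdjoinRoot (hyperellipticPoly k p) ≃ₐ[k] AdjoinRoot (hyperellipticPoly k p)))
        = 2 * p * (p - 1) := by
  have : Fact p.Prime := ⟨hp⟩
  have hirr := irreducible_hyperellipticPoly (k := k) hp hodd
  have : Fact (Irreducible (hyperellipticPoly k p)) := ⟨hirr⟩
  have hpos : 0 < 2 * (p - 1) := Nat.mul_pos two_pos hp.pred_pos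
  have hζ := hξ.inv
  have hζ0 := hζ.ne_zero hpos.ne'
  have hζp : (ξ⁻¹ ^ 2) ^ p = ξ⁻¹ ^ 2 := by
    rw [← pow_sub_one_mul hp.ne_zero, ← pow_mul, hζ.pow_eq_one, one_mul]
  have hneg : ξ⁻¹ ^ (p - 1) = -1 := (hζ.pow hpos (mul_comm ..)).eq_neg_one_of_two_right
  obtain ⟨σ, hσX, hσroot⟩ := exists_translation_adjoinRoot_hyperellipticPoly (k := k) (p := p)
  obtain ⟨ρ, hρX, hρroot⟩ := exists_dilation_adjoinRoot_hyperellipticPoly hζ0 hζp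
  have hσ : orderOf σ = p := orderOf_translation hσX hσroot
  have hρ : orderOf ρ = 2 * (p - 1) :=
    (orderOf_dilation hρX hρroot root_hyperellipticPoly_ne_zero).trans hζ.eq_orderOf.symm
  have hconj := conj_translation_mem_zpowers (pow_ne_zero 2 hζ0) hζp hσX hσroot hρX hρroot
  refine ⟨hirr, Field.toIsField _, finrank_adjoinRoot_hyperellipticPoly, σ, ρ, hσX, hσroot,
    by rw [hρX, Algebra.smul_def, inv_pow], by rw [hρroot, Algebra.smul_def], hσ, hρ, ?_, ?_, ?_⟩
  · rw [algEquiv_pow_apply_of_apply_eq_smul hρX, ← pow_mul, hζ.pow_eq_one, one_smul]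
  · rw [algEquiv_pow_apply_of_apply_eq_smul hρroot, hneg, neg_smul, one_smul]
  · rw [natCard_closure_pair_of_conj_mem_zpowers (orderOf_pos_iff.1 (hσ.symm ▸ hp.pos)) hconj
      (hσ.symm ▸ hρ.symm ▸ coprime_two_mul_sub_one hodd), hσ, hρ]
    ring
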